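/- For every z > 2 and every i ∈ {1, …, n}, E|f_z(W̄⁽ⁱ⁾)| ≤ (1/2)(e^{−1/2} + e^{e − 2}) · e^{−z/2}. -/

import Mathlib

open MeasureTheory ProbabilityTheory Real

/-- The standard normal cumulative distribution function. -/
noncomputable def Phi (z : ℝ) : ℝ :=
  (Real.sqrt (2 * Real.pi))⁻¹ * ∫ u in Set.Iic z, Real.exp (-u ^ 2 / 2)

/-- The bounded solution `f_z` of the Stein equation
`f'(w) - w f(w) = 1{w ≤ z} - Φ(z)`. -/
noncomputable def fz (z w : ℝ) : ℝ :=
  if w ≤ z then Real.sqrt (2 * Real.pi) * Real.exp (w ^ 2 / 2) * Phi w * (1 - Phi z)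
  else Real.sqrt (2 * Real.pi) * Real.exp (w ^ 2 / 2) * Phi z * (1 - Phi w)

/-- The derivative `f_z'`, expressed via the Stein equation. -/
noncomputable def fz' (z w : ℝ) : ℝ :=
  w * fz z w + (if w ≤ z then 1 else 0) - Phi z

/-- The truncation `x̄ᵢ = ξᵢ 1{ξᵢ ≤ 1}`. -/
noncomputable def xbar {Ω : Type*} {n : ℕ} (ξ : Fin n → Ω → ℝ) (i : Fin n) (ω : Ω) : ℝ :=
  if ξ i ω ≤ 1 then ξ i ω else 0

/-- `W̄ = ∑ᵢ x̄ᵢ`. -/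
noncomputable def Wbar {Ω : Type*} {n : ℕ} (ξ : Fin n → Ω → ℝ) (ω : Ω) : ℝ :=
  ∑ i, xbar ξ i ω

/-- `W̄⁽ⁱ⁾ = W̄ - x̄ᵢ`. -/
noncomputable def Wbari {Ω : Type*} {n : ℕ} (ξ : Fin n → Ω → ℝ) (i : Fin n) (ω : Ω) : ℝ :=
  Wbar ξ ω - xbar ξ i ω

/-- `K̄ᵢ(t) = E[x̄ᵢ (1{0 ≤ t ≤ x̄ᵢ} - 1{x̄ᵢ ≤ t < 0})]`. -/
noncomputable def Kbar {Ω : Type*} [MeasureSpace Ω] {n : ℕ} (ξ : Fin n → Ω → ℝ)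
    (i : Fin n) (t : ℝ) : ℝ :=
  ∫ ω, xbar ξ i ω * ((if 0 ≤ t ∧ t ≤ xbar ξ i ω then (1 : ℝ) else 0)
    - (if xbar ξ i ω ≤ t ∧ t < 0 then (1 : ℝ) else 0))

/-- `β₂ = ∑ᵢ E[ξᵢ² 1{|ξᵢ| > 1}]`. -/
noncomputable def beta2 {Ω : Type*} [MeasureSpace Ω] {n : ℕ} (ξ : Fin n → Ω → ℝ) : ℝ :=
  ∑ i, ∫ ω, (if 1 < |ξ i ω| then (ξ i ω) ^ 2 else 0)

/-- `β₃ = ∑ᵢ E[|ξᵢ|³ 1{|ξᵢ| ≤ 1}]`. -/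
noncomputable def beta3 {Ω : Type*} [MeasureSpace Ω] {n : ℕ} (ξ : Fin n → Ω → ℝ) : ℝ :=
  ∑ i, ∫ ω, (if |ξ i ω| ≤ 1 then |ξ i ω| ^ 3 else 0)

/-!
The Mills ratio `M x = (1 - Φ x) / φ x` is the Laplace transform `∫ e^{-xt - t²/2} dt` over `t > 0`,
so it is antitone and at most `1 / x`. Since `f_z w` equals `M (-w) (1 - Φ z)` or `M w Φ z`, this
gives `f_z w ≤ z⁻¹` everywhere and `f_z w ≤ z⁻¹ e^{a²/2 - az}` for `w ≤ z - a`; on the remaining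
event `w > z - a` the constant bound is dominated by `z⁻¹ e^{t(w - (z - a))}`. Taking expectations
leaves the moment generating function of the truncated sum, which Bennett's inequality
`e^{tx} ≤ 1 + tx + (e^t - 1 - t) x²` for `x ≤ 1` controls. The theorem is the case `a = t = 1`.
-/

section NormalDistribution

lemma integrable_exp_neg_sq_div_two : Integrable fun u : ℝ ↦ exp (-u ^ 2 / 2) :=
  (integrable_exp_neg_mul_sq (b := 1 / 2) (by norm_num)).congr <| ae_of_all _ fun u ↦ by ring_nf

lemma integral_exp_neg_sq_div_two : ∫ u : ℝ, exp (-u ^ 2 / 2) = √(2 * π) := by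
  convert integral_gaussian (1 / 2) using 3 <;> ring_nf

lemma one_sub_Phi_eq_integral_Ioi (x : ℝ) :
    1 - Phi x = (√(2 * π))⁻¹ * ∫ u in Set.Ioi x, exp (-u ^ 2 / 2) := by
  have hsplit := intervalIntegral.integral_Iic_add_Ioi (b := x)
    integrable_exp_neg_sq_div_two.integrableOn integrable_exp_neg_sq_div_two.integrableOn
  rw [integral_exp_neg_sq_div_two] at hsplit
  rw [Phi, eq_sub_of_add_eq' hsplit]
  field_simp

lemma Phi_neg (x : ℝ) : Phi (-x) = 1 - Phi x := by
  have hreflect := integral_comp_neg_Iic (-x) fun u : ℝ ↦ exp (-u ^ 2 / 2)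
  simp only [neg_sq, neg_neg] at hreflect
  rw [Phi, hreflect, one_sub_Phi_eq_integral_Ioi]

lemma Phi_nonneg (x : ℝ) : 0 ≤ Phi x :=
  mul_nonneg (by positivity) (integral_nonneg fun _ ↦ (exp_pos _).le)

lemma one_sub_Phi_nonneg (x : ℝ) : 0 ≤ 1 - Phi x :=
  Phi_neg x ▸ Phi_nonneg (-x)

lemma Phi_le_one (x : ℝ) : Phi x ≤ 1 :=
  sub_nonneg.1 (one_sub_Phi_nonneg x)

end NormalDistribution

section MillsRatio

/-- The Mills ratio `(1 - Φ x) / φ x` of the standard normal distribution, where the division by the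
density `φ x` is written as multiplication by `√(2π) e^{x²/2}`. Both branches of `fz` are multiples
of it. -/
noncomputable def millsRatio (x : ℝ) : ℝ :=
  √(2 * π) * exp (x ^ 2 / 2) * (1 - Phi x)

lemma millsRatio_neg (x : ℝ) : millsRatio (-x) = √(2 * π) * exp (x ^ 2 / 2) * Phi x := by
  rw [millsRatio, Phi_neg, neg_sq, sub_sub_cancel]

lemma millsRatio_nonneg (x : ℝ) : 0 ≤ millsRatio x :=
  mul_nonneg (by positivity) (one_sub_Phi_nonneg x)

lemma millsRatio_eq_integral (x : ℝ) :
    millsRatio x = ∫ t in Set.Ioi 0, exp (-x * t - t ^ 2 / 2) := by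
  have hshift : ∫ u in Set.Ioi x, exp (-u ^ 2 / 2) = ∫ t in Set.Ioi 0, exp (-(x + t) ^ 2 / 2) := by
    rw [← (measurePreserving_add_left volume x).setIntegral_preimage_emb
      (measurableEmbedding_addLeft x), Set.preimage_const_add_Ioi, sub_self]
  calc millsRatio x = exp (x ^ 2 / 2) * ∫ t in Set.Ioi 0, exp (-(x + t) ^ 2 / 2) := by
        rw [millsRatio, one_sub_Phi_eq_integral_Ioi, hshift]
        field_simp
    _ = ∫ t in Set.Ioi 0, exp (-x * t - t ^ 2 / 2) := by
        rw [← integral_const_mul]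
        congr with t
        rw [← exp_add]
        ring_nf

lemma integrable_exp_mul_sub_sq_div_two (c : ℝ) :
    Integrable fun t : ℝ ↦ exp (c * t - t ^ 2 / 2) := by
  refine ((integrable_exp_neg_sq_div_two.comp_sub_left c).const_mul (exp (c ^ 2 / 2))).congr
    (ae_of_all _ fun t ↦ ?_)
  simp only [← exp_add]
  ring_nf

lemma antitone_millsRatio : Antitone millsRatio := by
  intro x y hxy
  rw [millsRatio_eq_integral, millsRatio_eq_integral]
  refine setIntegral_mono_on (integrable_exp_mul_sub_sq_div_two _).integrableOn
    (integrable_exp_mul_sub_sq_div_two _).integrableOn measurableSet_Ioi fun t ht ↦ ?_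
  have ht : 0 < t := ht
  gcongr

lemma millsRatio_le_inv {x : ℝ} (hx : 0 < x) : millsRatio x ≤ x⁻¹ := by
  calc millsRatio x = ∫ t in Set.Ioi 0, exp (-x * t - t ^ 2 / 2) := millsRatio_eq_integral x
    _ ≤ ∫ t in Set.Ioi 0, exp (-x * t) :=
        setIntegral_mono (integrable_exp_mul_sub_sq_div_two _).integrableOn
          (integrableOn_exp_mul_Ioi (neg_lt_zero.2 hx) 0)
          fun t ↦ exp_le_exp.2 (sub_le_self _ (by positivity))
    _ = x⁻¹ := by
        rw [integral_exp_mul_Ioi (neg_lt_zero.2 hx), mul_zero, exp_zero, neg_div_neg_eq, one_div]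

end MillsRatio

section SteinSolution

variable {z w a t : ℝ}

lemma fz_of_le (h : w ≤ z) : fz z w = millsRatio (-w) * (1 - Phi z) := by
  rw [fz, if_pos h, millsRatio_neg]

lemma fz_of_lt (h : z < w) : fz z w = millsRatio w * Phi z := by
  rw [fz, if_neg h.not_ge, millsRatio, mul_right_comm]

lemma fz_nonneg (z w : ℝ) : 0 ≤ fz z w := by
  rcases le_or_gt w z with h | h
  · exact fz_of_le h ▸ mul_nonneg (millsRatio_nonneg _) (one_sub_Phi_nonneg z)
  · exact fz_of_lt h ▸ mul_nonneg (millsRatio_nonneg w) (Phi_nonneg z)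

lemma fz_le_of_le_sub (hz : 0 < z) (ha : 0 ≤ a) (hw : w ≤ z - a) :
    fz z w ≤ z⁻¹ * exp (a ^ 2 / 2 - a * z) := by
  calc fz z w = millsRatio (-w) * (1 - Phi z) := fz_of_le (by linarith)
    _ ≤ millsRatio (-(z - a)) * (1 - Phi z) :=
        mul_le_mul_of_nonneg_right (antitone_millsRatio (neg_le_neg hw)) (one_sub_Phi_nonneg z)
    _ = √(2 * π) * exp ((z - a) ^ 2 / 2) * (1 - Phi z) * Phi (z - a) := by
        rw [millsRatio_neg, mul_right_comm]
    _ ≤ √(2 * π) * exp ((z - a) ^ 2 / 2) * (1 - Phi z) :=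
        mul_le_of_le_one_right (mul_nonneg (by positivity) (one_sub_Phi_nonneg z)) (Phi_le_one _)
    _ = millsRatio z * exp (a ^ 2 / 2 - a * z) := by
        rw [millsRatio, show (z - a) ^ 2 / 2 = z ^ 2 / 2 + (a ^ 2 / 2 - a * z) by ring, exp_add]
        ring
    _ ≤ z⁻¹ * exp (a ^ 2 / 2 - a * z) := by gcongr; exact millsRatio_le_inv hz

lemma fz_le_inv (hz : 0 < z) (w : ℝ) : fz z w ≤ z⁻¹ := by
  rcases le_or_gt w z with h | h
  · simpa using fz_le_of_le_sub hz le_rfl (h.trans_eq (sub_zero z).symm)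
  · calc fz z w = millsRatio w * Phi z := fz_of_lt h
      _ ≤ millsRatio w := mul_le_of_le_one_right (millsRatio_nonneg w) (Phi_le_one z)
      _ ≤ millsRatio z := antitone_millsRatio h.le
      _ ≤ z⁻¹ := millsRatio_le_inv hz

lemma fz_le_exp_add_exp (hz : 0 < z) (ha : 0 ≤ a) (ht : 0 ≤ t) (w : ℝ) :
    fz z w ≤ z⁻¹ * (exp (a ^ 2 / 2 - a * z) + exp (-(t * (z - a))) * exp (t * w)) := by
  rw [← exp_add]
  rcases le_or_gt w (z - a) with h | h
  · refine (fz_le_of_le_sub hz ha h).trans ?_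
    gcongr
    exact le_add_of_nonneg_right (exp_pos _).le
  · refine (fz_le_inv hz w).trans (le_mul_of_one_le_right (by positivity) ?_)
    have : 0 ≤ -(t * (z - a)) + t * w := by nlinarith
    linarith [one_le_exp this, exp_pos (a ^ 2 / 2 - a * z)]

end SteinSolution

section Bennett

variable {t x : ℝ}

lemma exp_le_quadratic_of_nonpos (hx : x ≤ 0) : exp x ≤ 1 + x + x ^ 2 / 2 := by
  have hquad : 1 + -x + (-x) ^ 2 / 2 ≤ exp (-x) := quadratic_le_exp_of_nonneg (neg_nonneg.2 hx)
  have hpos : 0 < 1 + -x + (-x) ^ 2 / 2 := by nlinarith [sq_nonneg x]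
  calc exp x = (exp (-x))⁻¹ := by rw [exp_neg, inv_inv]
    _ ≤ (1 + -x + (-x) ^ 2 / 2)⁻¹ := inv_anti₀ hpos hquad
    _ ≤ 1 + x + x ^ 2 / 2 := by
        -- The product of the two quadratics is `1 + x⁴ / 4`.
        rw [inv_le_iff_one_le_mul₀ hpos]
        nlinarith [sq_nonneg (x ^ 2)]

lemma hasSum_exp_sub_one_sub (x : ℝ) :
    HasSum (fun k : ℕ ↦ x ^ (k + 2) / (k + 2).factorial) (exp x - 1 - x) := by
  have hexp : HasSum (fun k : ℕ ↦ x ^ k / k.factorial) (exp x) := by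
    rw [exp_eq_exp_ℝ]
    exact NormedSpace.expSeries_div_hasSum_exp x
  simpa [Finset.sum_range_succ, sub_sub] using (hasSum_nat_add_iff' 2).2 hexp

lemma sq_div_two_le_exp_sub_one_sub (ht : 0 ≤ t) : t ^ 2 / 2 ≤ exp t - 1 - t := by
  linarith [quadratic_le_exp_of_nonneg ht]

lemma exp_mul_le_of_le_one (ht : 0 ≤ t) (hx : x ≤ 1) :
    exp (t * x) ≤ 1 + t * x + (exp t - 1 - t) * x ^ 2 := by
  rcases le_total x 0 with hx0 | hx0
  · calc exp (t * x) ≤ 1 + t * x + (t * x) ^ 2 / 2 :=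
          exp_le_quadratic_of_nonpos (mul_nonpos_of_nonneg_of_nonpos ht hx0)
      _ = 1 + t * x + t ^ 2 / 2 * x ^ 2 := by ring
      _ ≤ 1 + t * x + (exp t - 1 - t) * x ^ 2 := by
          gcongr
          exact sq_div_two_le_exp_sub_one_sub ht
  · have hterm (k : ℕ) : (t * x) ^ (k + 2) / (k + 2).factorial
        ≤ t ^ (k + 2) / (k + 2).factorial * x ^ 2 := by
      rw [mul_pow, mul_div_right_comm]
      exact mul_le_mul_of_nonneg_left (pow_le_pow_of_le_one hx0 hx (Nat.le_add_left 2 k))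
        (by positivity)
    linarith [hasSum_le hterm (hasSum_exp_sub_one_sub (t * x))
      ((hasSum_exp_sub_one_sub t).mul_right (x ^ 2))]

end Bennett

section UpperTruncation

/-- The one-sided truncation `x 1{x ≤ 1}` of a real number, so that the truncated variable `x̄ᵢ` is
`upperTrunc ∘ ξᵢ`. -/
noncomputable def upperTrunc (x : ℝ) : ℝ :=
  if x ≤ 1 then x else 0

lemma upperTrunc_le_one (x : ℝ) : upperTrunc x ≤ 1 := by
  unfold upperTrunc
  split_ifs with h
  exacts [h, zero_le_one]

lemma measurable_upperTrunc : Measurable upperTrunc :=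
  Measurable.ite measurableSet_Iic measurable_id measurable_const

lemma exp_mul_upperTrunc_le {t : ℝ} (ht : 0 ≤ t) (x : ℝ) :
    exp (t * upperTrunc x) ≤ 1 + t * x + (exp t - 1 - t) * x ^ 2 := by
  unfold upperTrunc
  split_ifs with hx
  · exact exp_mul_le_of_le_one ht hx
  · have hcoeff : 0 ≤ exp t - 1 - t := (by positivity : 0 ≤ t ^ 2 / 2).trans
      (sq_div_two_le_exp_sub_one_sub ht)
    have hlin : 0 ≤ t * x := mul_nonneg ht (zero_le_one.trans (not_le.1 hx).le)
    rw [mul_zero, exp_zero]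
    linarith [mul_nonneg hcoeff (sq_nonneg x)]

lemma Wbari_eq_sum_erase {Ω : Type*} {n : ℕ} (ξ : Fin n → Ω → ℝ) (i : Fin n) :
    Wbari ξ i = ∑ j ∈ Finset.univ.erase i, upperTrunc ∘ ξ j := by
  funext ω
  rw [Finset.sum_apply, Finset.sum_erase_eq_sub (Finset.mem_univ i)]
  rfl

end UpperTruncation

section Expectation

variable {Ω ι : Type*} {mΩ : MeasurableSpace Ω} {μ : Measure Ω} {z a t : ℝ}

lemma mgf_upperTrunc_comp_le [IsProbabilityMeasure μ] {X : Ω → ℝ} (hL2 : MemLp X 2 μ)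
    (hmean : ∫ ω, X ω ∂μ ≤ 0) (ht : 0 ≤ t) :
    mgf (upperTrunc ∘ X) μ t ≤ exp ((exp t - 1 - t) * ∫ ω, X ω ^ 2 ∂μ) := by
  have hlin : Integrable (fun ω ↦ 1 + t * X ω) μ :=
    (integrable_const 1).add ((hL2.integrable one_le_two).const_mul t)
  have hsq : Integrable (fun ω ↦ (exp t - 1 - t) * X ω ^ 2) μ := hL2.integrable_sq.const_mul _
  calc mgf (upperTrunc ∘ X) μ t
      ≤ ∫ ω, 1 + t * X ω + (exp t - 1 - t) * X ω ^ 2 ∂μ :=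
        integral_mono_of_nonneg (ae_of_all _ fun _ ↦ (exp_pos _).le) (hlin.add hsq)
          (ae_of_all _ fun ω ↦ exp_mul_upperTrunc_le ht (X ω))
    _ = 1 + t * ∫ ω, X ω ∂μ + (exp t - 1 - t) * ∫ ω, X ω ^ 2 ∂μ := by
        rw [integral_add hlin hsq, integral_add (integrable_const 1)
          ((hL2.integrable one_le_two).const_mul t), integral_const_mul, integral_const_mul,
          integral_const, probReal_univ, one_smul]
    _ ≤ (exp t - 1 - t) * ∫ ω, X ω ^ 2 ∂μ + 1 := by
        linarith [mul_nonpos_of_nonneg_of_nonpos ht hmean]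
    _ ≤ exp ((exp t - 1 - t) * ∫ ω, X ω ^ 2 ∂μ) := add_one_le_exp _

lemma integral_abs_fz_le_mgf [IsProbabilityMeasure μ] {W : Ω → ℝ} (hz : 0 < z) (ha : 0 ≤ a)
    (ht : 0 ≤ t) (hW : Integrable (fun ω ↦ exp (t * W ω)) μ) :
    ∫ ω, |fz z (W ω)| ∂μ
      ≤ z⁻¹ * (exp (a ^ 2 / 2 - a * z) + exp (-(t * (z - a))) * mgf W μ t) := by
  calc ∫ ω, |fz z (W ω)| ∂μ
      ≤ ∫ ω, z⁻¹ * (exp (a ^ 2 / 2 - a * z) + exp (-(t * (z - a))) * exp (t * W ω)) ∂μ :=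
        integral_mono_of_nonneg (ae_of_all _ fun _ ↦ abs_nonneg _)
          (((integrable_const _).add (hW.const_mul _)).const_mul _)
          (ae_of_all _ fun ω ↦
            (abs_of_nonneg (fz_nonneg z _)).trans_le (fz_le_exp_add_exp hz ha ht _))
    _ = z⁻¹ * (exp (a ^ 2 / 2 - a * z) + exp (-(t * (z - a))) * mgf W μ t) := by
        rw [integral_const_mul, integral_add (integrable_const _) (hW.const_mul _),
          integral_const, probReal_univ, one_smul, integral_const_mul, mgf]

variable {X : ι → Ω → ℝ}

lemma mgf_sum_upperTrunc_comp_le (hindep : iIndepFun X μ) (hL2 : ∀ j, MemLp (X j) 2 μ)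
    (hmean : ∀ j, ∫ ω, X j ω ∂μ ≤ 0) (ht : 0 ≤ t) (s : Finset ι) :
    mgf (∑ j ∈ s, upperTrunc ∘ X j) μ t
      ≤ exp ((exp t - 1 - t) * ∑ j ∈ s, ∫ ω, X j ω ^ 2 ∂μ) := by
  have := hindep.isProbabilityMeasure
  have hindepTrunc : iIndepFun (fun j ↦ upperTrunc ∘ X j) μ :=
    hindep.comp _ fun _ ↦ measurable_upperTrunc
  calc mgf (∑ j ∈ s, upperTrunc ∘ X j) μ t = ∏ j ∈ s, mgf (upperTrunc ∘ X j) μ t :=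
        hindepTrunc.mgf_sum₀
          (fun j ↦ measurable_upperTrunc.comp_aemeasurable (hL2 j).aemeasurable) s
    _ ≤ ∏ j ∈ s, exp ((exp t - 1 - t) * ∫ ω, X j ω ^ 2 ∂μ) :=
        Finset.prod_le_prod (fun _ _ ↦ mgf_nonneg)
          fun j _ ↦ mgf_upperTrunc_comp_le (hL2 j) (hmean j) ht
    _ = exp ((exp t - 1 - t) * ∑ j ∈ s, ∫ ω, X j ω ^ 2 ∂μ) := by
        rw [← exp_sum, Finset.mul_sum]

lemma integrable_exp_mul_sum_upperTrunc_comp [IsFiniteMeasure μ] (ht : 0 ≤ t) (s : Finset ι)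
    (hX : ∀ j ∈ s, AEMeasurable (X j) μ) :
    Integrable (fun ω ↦ exp (t * (∑ j ∈ s, upperTrunc ∘ X j) ω)) μ := by
  refine integrable_exp_mul_of_le t (∑ _j ∈ s, 1) ht
    (Finset.aemeasurable_sum s fun j hj ↦ measurable_upperTrunc.comp_aemeasurable (hX j hj))
    (ae_of_all _ fun ω ↦ ?_)
  rw [Finset.sum_apply]
  exact Finset.sum_le_sum fun j _ ↦ upperTrunc_le_one (X j ω)

theorem expectation_abs_fz_bound_general (hindep : iIndepFun X μ) (hL2 : ∀ j, MemLp (X j) 2 μ)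
    (hmean : ∀ j, ∫ ω, X j ω ∂μ ≤ 0) (s : Finset ι) (hz : 0 < z) (ha : 0 ≤ a) (ht : 0 ≤ t) :
    ∫ ω, |fz z ((∑ j ∈ s, upperTrunc ∘ X j) ω)| ∂μ
      ≤ z⁻¹ * (exp (a ^ 2 / 2 - a * z)
          + exp (-(t * (z - a))) * exp ((exp t - 1 - t) * ∑ j ∈ s, ∫ ω, X j ω ^ 2 ∂μ)) := by
  have := hindep.isProbabilityMeasure
  refine (integral_abs_fz_le_mgf hz ha ht
    (integrable_exp_mul_sum_upperTrunc_comp ht s fun j _ ↦ (hL2 j).aemeasurable)).trans ?_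
  gcongr
  exact mgf_sum_upperTrunc_comp_le hindep hL2 hmean ht s

end Expectation

lemma inv_mul_exp_add_exp_le {z v : ℝ} (hz : 2 ≤ z) (hv : v ≤ 1) :
    z⁻¹ * (exp (1 / 2 - z) + exp (-(z - 1)) * exp ((exp 1 - 2) * v))
      ≤ 1 / 2 * (exp (-(1 / 2)) + exp (exp 1 - 2)) * exp (-z / 2) := by
  have hcoeff : 0 ≤ exp 1 - 2 := by linarith [add_one_le_exp (1 : ℝ)]
  have hleft : exp (1 / 2 - z) ≤ exp (-(1 / 2)) * exp (-z / 2) := by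
    rw [← exp_add, exp_le_exp]
    linarith
  have hright : exp (-(z - 1)) * exp ((exp 1 - 2) * v) ≤ exp (-z / 2) * exp (exp 1 - 2) := by
    gcongr
    · linarith
    · exact mul_le_of_le_one_right hcoeff hv
  calc z⁻¹ * (exp (1 / 2 - z) + exp (-(z - 1)) * exp ((exp 1 - 2) * v))
      ≤ 2⁻¹ * (exp (-(1 / 2)) * exp (-z / 2) + exp (-z / 2) * exp (exp 1 - 2)) := by gcongr
    _ = 1 / 2 * (exp (-(1 / 2)) + exp (exp 1 - 2)) * exp (-z / 2) := by ring

/-- Bound on E|f_z(Wbar^(i))| for z > 2. -/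
theorem expectation_abs_fz_bound
    {Ω : Type*} [MeasureSpace Ω] [IsProbabilityMeasure (ℙ : Measure Ω)]
    {n : ℕ} (ξ : Fin n → Ω → ℝ)
    (hmeas : ∀ i, Measurable (ξ i))
    (hindep : iIndepFun ξ ℙ)
    (hL2 : ∀ i, MemLp (ξ i) 2 ℙ)
    (hmean : ∀ i, ∫ ω, ξ i ω = 0)
    (hvar : ∑ i, ∫ ω, (ξ i ω) ^ 2 = 1)
    (z : ℝ) (hz : 2 < z) (i : Fin n) :
    (∫ ω, |fz z (Wbari ξ i ω)|)
      ≤ (1 / 2) * (Real.exp (-(1 / 2) : ℝ) + Real.exp (Real.exp 1 - 2))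
          * Real.exp (-z / 2) := by
  have hvar_erase : ∑ j ∈ Finset.univ.erase i, ∫ ω, (ξ j ω) ^ 2 ≤ 1 :=
    hvar ▸ Finset.sum_le_sum_of_subset_of_nonneg (Finset.erase_subset _ _)
      fun j _ _ ↦ integral_nonneg fun ω ↦ sq_nonneg (ξ j ω)
  have hbound := expectation_abs_fz_bound_general hindep hL2 (fun j ↦ (hmean j).le)
    (Finset.univ.erase i) (zero_lt_two.trans hz) zero_le_one zero_le_one
  rw [← Wbari_eq_sum_erase, one_pow, one_mul, one_mul, sub_sub, one_add_one_eq_two] at hbound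
  exact hbound.trans (inv_mul_exp_add_exp_le hz.le hvar_erase)
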